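/- arXiv:1501.02071 — 2 statements merged into one kernel-verified Lean document; each statement's English description precedes it below -/
import Mathlib

section
/- There exists a function f : ℕ × ℕ → ℕ with the following property: for every prime p, every natural number n ≥ 1, every finite p-group P acted on by automorphisms by a cyclic group ⟨φ⟩ of order p^n, every prime q ≠ p, and every finite faithful module V over the prime field 𝔽_q for the semidirect product P ⋊ ⟨φ⟩, the derived length of the subgroup [P, φ^{p^{n-1}}] is at most f(|C_V(φ)|, p^n). -/
/-- The subgroup `[P, ψ]` generated by all commutators `x⁻¹ · ψ(x)`. -/
def commutatorWithAut {P : Type*} [Group P] (ψ : MulAut P) : Subgroup P :=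
  Subgroup.closure {y : P | ∃ x : P, y = x⁻¹ * ψ x}

/-!
Let `G = P ⋊ ⟨φ⟩`, let `z = φ ^ p ^ (n - 1)`, and let `A` be a maximal abelian normal subgroup of
`G`; as `G` is nilpotent, `A` contains its own centralizer. Extending scalars, which does not change
`dim C_V(φ)`, we may take the field algebraically closed; as its characteristic is not `p`, the
module `V` is then the direct sum of the weight spaces of `A`, and `G` permutes the weights. A
weight moved by `z` lies in a regular `⟨φ⟩`-orbit, and each regular orbit contributes a norm vector
`v + φv + φ²v + ⋯` to `C_V(φ)`; these vectors are linearly independent, so `z` moves at most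
`p ^ n * dim C_V(φ)` weights.

Let `m` be the number of weights moved by `z`, and let `L` be a subgroup containing the stabilizer
`S` of a weight `χ`. Every conjugate of `z` moves as many weights as `z`, whereas an element outside
`L` moves the whole `L`-orbit of `χ`, which has `|L : S|` elements. Hence if `|L : S| > m`, then `L`
contains the normal closure `N` of `z`. Since `G` is a `p`-group, such an `L` (or `L = G`) exists
with `|L : S| ≤ p * (m + 1)`, and so a term of bounded index of the derived series of `N` lies in
`S`. That term therefore fixes all weights and commutes with `A` on `V`. As `[P, z] ≤ N` and `P`
acts faithfully on `V`, the corresponding term for `[P, z]` centralizes `A`, hence lies in the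
abelian group `A`.
-/

open Module
open scoped commutatorElement

section DerivedSeries

variable {G H : Type*} [Group G] [Group H]

lemma natCard_derivedSeries_add_le_of_ne_bot [Finite G] [Group.IsSolvable G] {n : ℕ}
    (h : derivedSeries G n ≠ ⊥) : Nat.card (derivedSeries G n) + n ≤ Nat.card G := by
  induction n with
  | zero => simp
  | succ n ih =>
    have hn : derivedSeries G n ≠ ⊥ := fun h0 ↦
      h (le_bot_iff.1 (h0 ▸ derivedSeries_antitone G n.le_succ))
    have hlt : derivedSeries G (n + 1) < derivedSeries G n :=
      Group.IsSolvable.commutator_lt_of_ne_bot hn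
    have hcard : Nat.card (derivedSeries G (n + 1)) < Nat.card (derivedSeries G n) :=
      Set.Finite.card_lt_card (Set.toFinite _) hlt
    have := ih hn
    omega

lemma derivedSeries_eq_bot_of_natCard_le [Finite G] [Group.IsSolvable G] {n : ℕ}
    (h : Nat.card G ≤ n) : derivedSeries G n = ⊥ := by
  by_contra hne
  have := natCard_derivedSeries_add_le_of_ne_bot hne
  have : 0 < Nat.card (derivedSeries G n) := Nat.card_pos
  omega

lemma derivedSeries_le_ker_of_derivedSeries_eq_bot (f : G →* H) {n : ℕ}
    (h : derivedSeries H n = ⊥) : derivedSeries G n ≤ f.ker :=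
  (derivedSeries G n).map_eq_bot_iff.1 <|
    le_bot_iff.1 (h ▸ map_derivedSeries_le_derivedSeries f n)

lemma natCard_quotient_normalCore_le (K : Subgroup G) [K.FiniteIndex] :
    Nat.card (G ⧸ K.normalCore) ≤ K.index.factorial := by
  rw [← Subgroup.index_eq_card, Subgroup.normalCore_eq_ker, Subgroup.index_ker,
    Subgroup.index_eq_card, ← Nat.card_perm]
  exact Subgroup.card_le_card_group _

lemma derivedSeries_factorial_index_le [Group.IsSolvable G] (K : Subgroup G) [K.FiniteIndex] :
    derivedSeries G K.index.factorial ≤ K :=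
  calc derivedSeries G K.index.factorial ≤ (QuotientGroup.mk' K.normalCore).ker :=
        derivedSeries_le_ker_of_derivedSeries_eq_bot _
          (derivedSeries_eq_bot_of_natCard_le (natCard_quotient_normalCore_le K))
    _ = K.normalCore := QuotientGroup.ker_mk' _
    _ ≤ K := K.normalCore_le

lemma map_derivedSeries_subtype_le (f : G →* H) {K : Subgroup G} {N : Subgroup H}
    (h : K ≤ N.comap f) (n : ℕ) :
    (derivedSeries K n).map (f.comp K.subtype) ≤ (derivedSeries N n).map N.subtype := by
  let g : K →* N := (f.comp K.subtype).codRestrict N fun x ↦ h x.2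
  calc (derivedSeries K n).map (f.comp K.subtype) = ((derivedSeries K n).map g).map N.subtype :=
        (Subgroup.map_map _ N.subtype g).symm
    _ ≤ (derivedSeries N n).map N.subtype :=
        Subgroup.map_mono (map_derivedSeries_le_derivedSeries g n)

lemma derivedSeries_succ_eq_bot_of_map_le {f : G →* H} (hf : Function.Injective f)
    {A : Subgroup H} [IsMulCommutative A] {n : ℕ} (h : (derivedSeries G n).map f ≤ A) :
    derivedSeries G (n + 1) = ⊥ := by
  rw [derivedSeries_succ, Subgroup.commutator_eq_bot_iff_le_centralizer]
  intro x hx y hy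
  apply hf
  rw [map_mul, map_mul]
  exact setLike_mul_comm (h (Subgroup.mem_map_of_mem f hy)) (h (Subgroup.mem_map_of_mem f hx))

end DerivedSeries

section SelfCentralizing

variable {G : Type*} [Group G]

lemma exists_mem_notMem_forall_commutator_mem [Group.IsNilpotent G] {H K : Subgroup G} [H.Normal]
    (h : ¬H ≤ K) : ∃ x ∈ H, x ∉ K ∧ ∀ g : G, ⁅g, x⁆ ∈ K := by
  classical
  have hex : ∃ i, H ⊓ (⊤ : Subgroup G).lowerCentralSeries i ≤ K := by
    obtain ⟨n, hn⟩ := Subgroup.nilpotent_iff_lowerCentralSeries.1 ‹Group.IsNilpotent G›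
    exact ⟨n, by simp [hn]⟩
  obtain ⟨i, hi⟩ : ∃ i, Nat.find hex = i + 1 := by
    refine Nat.exists_eq_succ_of_ne_zero fun h0 ↦ h ?_
    simpa [h0] using Nat.find_spec hex
  obtain ⟨x, ⟨hxH, hxi⟩, hxK⟩ :=
    SetLike.not_le_iff_exists.1 (Nat.find_min hex (m := i) (by omega))
  refine ⟨x, hxH, hxK, fun g ↦ ?_⟩
  -- `x` lies in the last `H ⊓ γᵢ(G)` not contained in `K`, and `⁅g, x⁆` lies in the next one.
  have hgx : ⁅g, x⁆ ∈ ⁅H, (⊤ : Subgroup G)⁆ ⊓ (⊤ : Subgroup G).lowerCentralSeries (i + 1) := by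
    rw [← commutatorElement_inv]
    exact inv_mem ⟨Subgroup.commutator_mem_commutator hxH (Subgroup.mem_top g),
      Subgroup.commutator_mem_commutator hxi (Subgroup.mem_top g)⟩
  exact Nat.find_spec hex (hi ▸ inf_le_inf_right _ (Subgroup.commutator_le_left H ⊤) hgx)

lemma normal_closure_insert {A : Subgroup G} [A.Normal] {x : G} (h : ∀ g : G, ⁅g, x⁆ ∈ A) :
    (Subgroup.closure (insert x (A : Set G))).Normal := by
  have hA : (A : Set G) ⊆ Subgroup.closure (insert x (A : Set G)) :=
    (Set.subset_insert x _).trans Subgroup.subset_closure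
  rw [← Subgroup.normalizer_eq_top_iff, ← top_le_iff, Subgroup.le_normalizer_closure_iff]
  rintro g - y (rfl | hy)
  · rw [← MulAut.conj_apply, conj_eq_commutatorElement_mul]
    exact mul_mem (hA (h g)) (Subgroup.subset_closure (Set.mem_insert y _))
  · exact hA (‹A.Normal›.conj_mem y hy g)

lemma isMulCommutative_closure_insert {A : Subgroup G} [IsMulCommutative A] {x : G}
    (h : x ∈ Subgroup.centralizer (A : Set G)) :
    IsMulCommutative (Subgroup.closure (insert x (A : Set G))) := by
  refine Subgroup.isMulCommutative_closure ?_
  rintro y (rfl | hy) z (rfl | hz)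
  · rfl
  · exact (h z hz).symm
  · exact h y hy
  · exact setLike_mul_comm hy hz

lemma exists_normal_isMulCommutative_centralizer_le (G : Type*) [Group G] [Finite G]
    [Group.IsNilpotent G] :
    ∃ A : Subgroup G, A.Normal ∧ IsMulCommutative A ∧ Subgroup.centralizer (A : Set G) ≤ A := by
  obtain ⟨A, hA⟩ := Set.Finite.exists_maximal
    (Set.toFinite {A : Subgroup G | A.Normal ∧ IsMulCommutative A})
    ⟨⊥, inferInstance, inferInstance⟩
  obtain ⟨hAn, hAc⟩ := hA.prop
  refine ⟨A, hAn, hAc, ?_⟩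
  by_contra hCA
  obtain ⟨x, hxC, hxA, hx⟩ := exists_mem_notMem_forall_commutator_mem hCA
  have hle := hA.le_of_ge ⟨normal_closure_insert hx, isMulCommutative_closure_insert hxC⟩
    ((Set.subset_insert x _).trans Subgroup.subset_closure)
  exact hxA (hle (Subgroup.subset_closure (Set.mem_insert x _)))

end SelfCentralizing

lemma commute_of_commute_map {G M : Type*} [Group G] [Monoid M] {f : G →* M} {N : Subgroup G}
    [N.Normal] (hf : Set.InjOn f N) {x g : G} (hx : x ∈ N) (h : Commute (f x) (f g)) :
    Commute x g := by
  have hconj : f (g * x * g⁻¹) = f x := by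
    rw [map_mul, map_mul, ← h.eq, mul_assoc, ← map_mul, mul_inv_cancel, map_one, mul_one]
  have : g * x * g⁻¹ = x := hf (‹N.Normal›.conj_mem x hx g) hx hconj
  exact (mul_inv_eq_iff_eq_mul.1 this).symm

section SubgroupsBetween

variable {G : Type*} [Group G] [Finite G] {p : ℕ} [hp : Fact p.Prime]

lemma exists_le_relIndex_eq_prime_pow (hG : IsPGroup p G) {H : Subgroup G} {j : ℕ}
    (h : p ^ j ≤ H.index) : ∃ L, H ≤ L ∧ H.relIndex L = p ^ j := by
  obtain ⟨b, hb⟩ := (hG.to_subgroup H).exists_card_eq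
  obtain ⟨i, hi⟩ := hG.index H
  have hcard : Nat.card G = p ^ (b + i) := by rw [← H.card_mul_index, hb, hi, pow_add]
  have hji : j ≤ i := (Nat.pow_le_pow_iff_right hp.out.one_lt).1 (hi ▸ h)
  obtain ⟨L, hL, hHL⟩ := Sylow.exists_subgroup_card_pow_prime_le p
    (hcard ▸ pow_dvd_pow p (Nat.add_le_add_left hji b)) H hb (Nat.le_add_right b j)
  have hmul : Nat.card H * H.relIndex L = Nat.card L := by
    simpa only [Subgroup.relIndex_bot_left] using Subgroup.relIndex_mul_relIndex ⊥ H L bot_le hHL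
  rw [hL, hb, pow_add] at hmul
  exact ⟨L, hHL, Nat.eq_of_mul_eq_mul_left (pow_pos hp.out.pos b) hmul⟩

lemma exists_le_relIndex_le_mul_succ (hG : IsPGroup p G) (H : Subgroup G) (m : ℕ) :
    ∃ L, H ≤ L ∧ H.relIndex L ≤ p * (m + 1) ∧ (L = ⊤ ∨ m < H.relIndex L) := by
  have hle : p ^ (Nat.log p m + 1) ≤ p * (m + 1) := by
    rw [pow_succ']
    exact Nat.mul_le_mul_left p (Nat.pow_log_le_add_one p m)
  rcases le_total (p ^ (Nat.log p m + 1)) H.index with h | h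
  · obtain ⟨L, hHL, hL⟩ := exists_le_relIndex_eq_prime_pow hG h
    exact ⟨L, hHL, hL ▸ hle, .inr (hL ▸ Nat.lt_pow_succ_log_self hp.out.one_lt m)⟩
  · exact ⟨⊤, le_top, H.relIndex_top_right.trans_le (h.trans hle), .inl rfl⟩

end SubgroupsBetween

section MovedPoints

variable {G X : Type*} [Group G] [MulAction G X]

lemma ncard_compl_fixedBy_conj (g z : G) :
    (MulAction.fixedBy X (g * z * g⁻¹))ᶜ.ncard = (MulAction.fixedBy X z)ᶜ.ncard := by
  rw [← MulAction.smul_fixedBy, ← Set.smul_set_compl, Set.ncard_smul_set]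

lemma mem_of_ncard_compl_fixedBy_lt_relIndex [Finite X] {z : G} {x : X} {L : Subgroup G}
    (hL : MulAction.stabilizer G x ≤ L)
    (h : (MulAction.fixedBy X z)ᶜ.ncard < (MulAction.stabilizer G x).relIndex L) : z ∈ L := by
  by_contra hz
  -- If `z` fixes a point `l • x` of the `L`-orbit, then `l⁻¹ * z * l` stabilizes `x`, so `z ∈ L`.
  have horbit : MulAction.orbit L x ⊆ (MulAction.fixedBy X z)ᶜ := by
    rintro _ ⟨l, rfl⟩ hfix
    have hmem : (l : G)⁻¹ * z * l ∈ L := hL <| by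
      rw [MulAction.mem_stabilizer_iff, mul_smul, mul_smul, inv_smul_eq_iff]
      exact hfix
    simp [Subgroup.mul_mem_cancel_left, Subgroup.mul_mem_cancel_right, hz] at hmem
  refine h.not_ge ?_
  calc (MulAction.stabilizer G x).relIndex L = (MulAction.orbit L x).ncard :=
        MulAction.index_stabilizer L x
    _ ≤ (MulAction.fixedBy X z)ᶜ.ncard := Set.ncard_le_ncard horbit

lemma normalClosure_le_of_ncard_compl_fixedBy_lt_relIndex [Finite X] {z : G} {x : X}
    {L : Subgroup G} (hL : MulAction.stabilizer G x ≤ L)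
    (h : (MulAction.fixedBy X z)ᶜ.ncard < (MulAction.stabilizer G x).relIndex L) :
    Subgroup.normalClosure {z} ≤ L := by
  refine (Subgroup.closure_le L).2 fun w hw ↦ ?_
  obtain ⟨_, rfl, hzw⟩ := Group.mem_conjugatesOfSet_iff.1 hw
  obtain ⟨g, rfl⟩ := isConj_iff.1 hzw
  exact mem_of_ncard_compl_fixedBy_lt_relIndex hL ((ncard_compl_fixedBy_conj g _).trans_lt h)

lemma map_derivedSeries_normalClosure_le_stabilizer [Finite G] [Finite X] {p m : ℕ}
    [Fact p.Prime] (hG : IsPGroup p G) {z : G} (hz : (MulAction.fixedBy X z)ᶜ.ncard ≤ m) (x : X) :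
    (derivedSeries (Subgroup.normalClosure {z}) (p * (m + 1)).factorial).map (Subgroup.subtype _) ≤
      MulAction.stabilizer G x := by
  have := hG.isNilpotent
  obtain ⟨L, hHL, hle, hL⟩ := exists_le_relIndex_le_mul_succ hG (MulAction.stabilizer G x) m
  have hzL : Subgroup.normalClosure {z} ≤ L := by
    rcases hL with rfl | hlt
    · exact le_top
    · exact normalClosure_le_of_ncard_compl_fixedBy_lt_relIndex hHL (hz.trans_lt hlt)
  calc (derivedSeries (Subgroup.normalClosure {z}) (p * (m + 1)).factorial).map (Subgroup.subtype _)
      ≤ (derivedSeries L (p * (m + 1)).factorial).map L.subtype :=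
        map_derivedSeries_subtype_le (MonoidHom.id G) hzL _
    _ ≤ ((MulAction.stabilizer G x).subgroupOf L).map L.subtype :=
        Subgroup.map_mono <| (derivedSeries_antitone L (Nat.factorial_le hle)).trans <|
          derivedSeries_factorial_index_le _
    _ ≤ MulAction.stabilizer G x := Subgroup.map_subgroupOf_eq_of_le hHL |>.le

end MovedPoints

section RegularOrbits

lemma stabilizer_smul_eq_bot_iff {H X : Type*} [Group H] [MulAction H X] (h : H) (x : X) :
    MulAction.stabilizer H (h • x) = ⊥ ↔ MulAction.stabilizer H x = ⊥ := by
  rw [MulAction.stabilizer_smul_eq_stabilizer_map_conj,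
    Subgroup.map_eq_bot_iff_of_injective _ (MulAut.conj h).injective]

lemma exists_injective_smul_range_eq (H X : Type*) [Group H] [MulAction H X] :
    ∃ s : Set X, Function.Injective (fun y : H × s ↦ y.1 • (y.2 : X)) ∧
      Set.range (fun y : H × s ↦ y.1 • (y.2 : X)) = {x | MulAction.stabilizer H x = ⊥} := by
  let r (x : X) : X := (Quotient.mk (MulAction.orbitRel H X) x).out
  have hr_mem (x : X) : r x ∈ MulAction.orbit H x :=
    MulAction.orbitRel_apply.1 (Quotient.mk_out (s := MulAction.orbitRel H X) x)
  have hr_smul (h : H) (x : X) : r (h • x) = r x :=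
    congrArg Quotient.out (Quotient.sound (MulAction.orbitRel_apply.2 (MulAction.mem_orbit x h)))
  refine ⟨{x | MulAction.stabilizer H x = ⊥ ∧ r x = x}, ?_, Set.ext fun x ↦ ⟨?_, fun hx ↦ ?_⟩⟩
  · rintro ⟨h, x, hx, hrx⟩ ⟨h', y, hy, hry⟩ (hxy : h • x = h' • y)
    obtain rfl : x = y := by rw [← hrx, ← hr_smul h x, hxy, hr_smul, hry]
    have hmem : h'⁻¹ * h ∈ MulAction.stabilizer H x := by
      rw [MulAction.mem_stabilizer_iff, mul_smul, hxy, inv_smul_smul]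
    rw [hx, Subgroup.mem_bot, inv_mul_eq_one] at hmem
    rw [hmem]
  · rintro ⟨⟨h, y, hy, -⟩, rfl⟩
    exact (stabilizer_smul_eq_bot_iff h y).2 hy
  · obtain ⟨h, hh : h • x = r x⟩ := hr_mem x
    have hrx : r (r x) = r x := by rw [← hh, hr_smul, hh]
    have hstab : MulAction.stabilizer H (r x) = ⊥ := hh ▸ (stabilizer_smul_eq_bot_iff h x).2 hx
    exact ⟨(h⁻¹, ⟨r x, hstab, hrx⟩), inv_smul_eq_iff.2 hh.symm⟩

variable {H k M : Type*} [Group H] [Field k] [AddCommGroup M] [Module k M]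
  {ρ : Representation k H M}

lemma linearIndependent_norm [Fintype H] {ι : Type*} {v : ι → M}
    (hv : LinearIndependent k fun y : H × ι ↦ ρ y.1 (v y.2)) :
    LinearIndependent k fun i ↦ ρ.norm (v i) := by
  rw [linearIndependent_iff'] at hv ⊢
  intro s c hc i hi
  refine hv (Finset.univ ×ˢ s) (fun y ↦ c y.2) ?_ (1, i) (Finset.mk_mem_product (by simp) hi)
  simpa [Finset.sum_product_right, Representation.norm, Finset.smul_sum] using hc

lemma natCard_le_finrank_invariants [Finite H] [FiniteDimensional k M] {ι : Type*} {v : ι → M}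
    (hv : LinearIndependent k fun y : H × ι ↦ ρ y.1 (v y.2)) :
    Nat.card ι ≤ finrank k ρ.invariants := by
  have := Fintype.ofFinite H
  have hnorm : LinearIndependent k
      fun i ↦ (⟨ρ.norm (v i), fun h ↦ ρ.self_norm_apply h (v i)⟩ : ρ.invariants) :=
    .of_comp ρ.invariants.subtype (linearIndependent_norm hv)
  have := hnorm.finite
  have := Fintype.ofFinite ι
  simpa using hnorm.fintype_card_le_finrank

lemma ncard_stabilizer_eq_bot_le [Finite H] [FiniteDimensional k M] {X : Type*} [MulAction H X]
    {W : X → Submodule k M} (hW : iSupIndep W) (hW₀ : ∀ x, W x ≠ ⊥)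
    (hρW : ∀ h x, ∀ v ∈ W x, ρ h v ∈ W (h • x)) :
    {x : X | MulAction.stabilizer H x = ⊥}.ncard ≤ Nat.card H * finrank k ρ.invariants := by
  obtain ⟨s, hs_inj, hs_range⟩ := exists_injective_smul_range_eq H X
  choose v hvW hv₀ using fun x ↦ (W x).ne_bot_iff.1 (hW₀ x)
  have hv : LinearIndependent k fun y : H × s ↦ ρ y.1 (v y.2) :=
    (hW.comp hs_inj).linearIndependent (fun y : H × s ↦ W (y.1 • (y.2 : X)))
      (fun y ↦ hρW y.1 y.2 (v y.2) (hvW y.2))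
      fun y ↦ (map_ne_zero_iff (ρ y.1) (ρ.apply_bijective y.1).injective).2 (hv₀ y.2)
  calc {x : X | MulAction.stabilizer H x = ⊥}.ncard = Nat.card (H × s) := by
        rw [← hs_range, ← Nat.card_coe_set_eq, Nat.card_range_of_injective hs_inj]
    _ = Nat.card H * Nat.card s := Nat.card_prod _ _
    _ ≤ Nat.card H * finrank k ρ.invariants :=
        Nat.mul_le_mul_left _ (natCard_le_finrank_invariants (v := fun x : s ↦ v x) hv)

end RegularOrbits

section PrimePowerOrder

variable {G X : Type*} [Group G] [MulAction G X] {p n : ℕ} [Fact p.Prime] {φ : G}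

lemma stabilizer_zpowers_eq_bot (hφ : φ ^ p ^ (n + 1) = 1) {x : X} (hx : φ ^ p ^ n • x ≠ x) :
    MulAction.stabilizer (Subgroup.zpowers φ) x = ⊥ := by
  have hperiod : MulAction.period φ x = p ^ (n + 1) := by
    refine Nat.eq_prime_pow_of_dvd_least_prime_pow Fact.out ?_ ?_
    · rwa [← MulAction.pow_smul_eq_iff_period_dvd]
    · rw [← MulAction.pow_smul_eq_iff_period_dvd, hφ, one_smul]
  rw [Subgroup.eq_bot_iff_forall]
  rintro ⟨_, i, rfl⟩ (hi : φ ^ i • x = x)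
  rw [MulAction.zpow_smul_eq_iff_period_dvd, hperiod] at hi
  exact Subtype.ext <| orderOf_dvd_iff_zpow_eq_one.1 <|
    (Int.natCast_dvd_natCast.2 (orderOf_dvd_of_pow_eq_one hφ)).trans hi

lemma ncard_compl_fixedBy_pow_le {k M : Type*} [Field k] [AddCommGroup M] [Module k M]
    [FiniteDimensional k M] [Finite X] {ρ : Representation k G M} {W : X → Submodule k M}
    (hW : iSupIndep W) (hW₀ : ∀ x, W x ≠ ⊥) (hρW : ∀ g x, ∀ v ∈ W x, ρ g v ∈ W (g • x))
    (hφ : φ ^ p ^ (n + 1) = 1) :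
    (MulAction.fixedBy X (φ ^ p ^ n))ᶜ.ncard ≤
      p ^ (n + 1) * finrank k (Module.End.eigenspace (ρ φ) 1) := by
  let H := Subgroup.zpowers φ
  have hφ_fin : IsOfFinOrder φ := isOfFinOrder_iff_pow_eq_one.2
    ⟨p ^ (n + 1), pow_pos (Fact.out : p.Prime).pos _, hφ⟩
  have : Finite H := hφ_fin.finite_zpowers.to_subtype
  let σ : Representation k H M := ρ.comp H.subtype
  have hinv : σ.invariants = Module.End.eigenspace (ρ φ) 1 := by
    ext v
    rw [Module.End.mem_eigenspace_iff, one_smul]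
    refine σ.mem_invariants_iff_of_forall_mem_zpowers ⟨φ, Subgroup.mem_zpowers φ⟩ ?_ v
    rintro ⟨_, i, rfl⟩
    exact ⟨i, rfl⟩
  calc (MulAction.fixedBy X (φ ^ p ^ n))ᶜ.ncard
      ≤ {x : X | MulAction.stabilizer H x = ⊥}.ncard :=
        Set.ncard_le_ncard fun x hx ↦ stabilizer_zpowers_eq_bot hφ hx
    _ ≤ Nat.card H * finrank k σ.invariants :=
        ncard_stabilizer_eq_bot_le hW hW₀ fun h x v hv ↦ hρW h x v hv
    _ ≤ p ^ (n + 1) * finrank k (Module.End.eigenspace (ρ φ) 1) := by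
        rw [hinv, Nat.card_zpowers]
        exact Nat.mul_le_mul_right _
          (Nat.le_of_dvd (pow_pos (Fact.out : p.Prime).pos _) (orderOf_dvd_of_pow_eq_one hφ))

end PrimePowerOrder

section Weights

variable {G k M : Type*} [Group G] [Field k] [AddCommGroup M] [Module k M]
  (ρ : Representation k G M) (A : Subgroup G)

/-- The weight space of `χ : A → k` in the representation `ρ` of `G ≥ A`: the vectors on which
each `a ∈ A` acts as the scalar `χ a`. For convenience `χ` is an arbitrary function; it is
automatically a character as soon as its weight space is nonzero. -/
def weightSpace (χ : A → k) : Submodule k M :=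
  ⨅ a : A, Module.End.eigenspace (ρ a) (χ a)

/-- The weights of `A` in the representation `ρ`: the functions `χ : A → k` with a nonzero weight
space. When `A` is normal in `G`, the group `G` permutes them by conjugation. -/
def Weight : Type _ :=
  {χ : A → k // weightSpace ρ A χ ≠ ⊥}

variable {ρ A}

lemma mem_weightSpace_iff {χ : A → k} {v : M} :
    v ∈ weightSpace ρ A χ ↔ ∀ a : A, ρ a v = χ a • v := by
  simp only [weightSpace, Submodule.mem_iInf, Module.End.mem_eigenspace_iff]

lemma map_mem_weightSpace_conj [A.Normal] {χ : A → k} {v : M} (hv : v ∈ weightSpace ρ A χ)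
    (g : G) : ρ g v ∈ weightSpace ρ A fun a ↦ χ (MulAut.conjNormal g⁻¹ a) := by
  rw [mem_weightSpace_iff] at hv ⊢
  intro a
  calc ρ a (ρ g v) = ρ g (ρ (MulAut.conjNormal g⁻¹ a : A) v) := by
        rw [← Module.End.mul_apply, ← Module.End.mul_apply, ← map_mul, ← map_mul]
        simp [mul_assoc]
    _ = χ (MulAut.conjNormal g⁻¹ a) • ρ g v := by rw [hv, map_smul]

lemma weightSpace_conj_ne_bot [A.Normal] {χ : A → k} (hχ : weightSpace ρ A χ ≠ ⊥) (g : G) :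
    weightSpace ρ A (fun a ↦ χ (MulAut.conjNormal g⁻¹ a)) ≠ ⊥ := by
  obtain ⟨v, hv, hv₀⟩ := (Submodule.ne_bot_iff _).1 hχ
  exact (Submodule.ne_bot_iff _).2 ⟨ρ g v, map_mem_weightSpace_conj hv g,
    (map_ne_zero_iff (ρ g) (ρ.apply_bijective g).injective).2 hv₀⟩

instance [A.Normal] : MulAction G (Weight ρ A) where
  smul g χ := ⟨fun a ↦ χ.1 (MulAut.conjNormal g⁻¹ a), weightSpace_conj_ne_bot χ.2 g⟩
  one_smul χ := Subtype.ext <| funext fun a ↦ congrArg χ.1 (by simp)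
  mul_smul g h χ := Subtype.ext <| funext fun a ↦ congrArg χ.1 <| by
    rw [mul_inv_rev, map_mul, MulAut.mul_apply]

lemma iSupIndep_weightSpace [IsMulCommutative A] : iSupIndep (weightSpace ρ A) := by
  have hcomm (a b : A) : Commute (ρ a) (ρ b) := Commute.map (setLike_mul_comm a.2 b.2) ρ
  have hmaps (a b : A) (μ : k) : Set.MapsTo (ρ a) (Module.End.maxGenEigenspace (ρ b) μ)
      (Module.End.maxGenEigenspace (ρ b) μ) :=
    Module.End.mapsTo_maxGenEigenspace_of_comm (hcomm b a) μ
  have hmax : iSupIndep fun χ : A → k ↦ ⨅ a : A, Module.End.maxGenEigenspace (ρ a) (χ a) :=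
    Module.End.independent_iInf_maxGenEigenspace_of_forall_mapsTo (fun a : A ↦ ρ a) hmaps
  exact hmax.mono fun χ ↦ iInf_mono fun a ↦ Module.End.eigenspace_le_maxGenEigenspace

instance [IsMulCommutative A] [FiniteDimensional k M] : Finite (Weight ρ A) :=
  WellFoundedGT.finite_ne_bot_of_iSupIndep iSupIndep_weightSpace

lemma iSup_weightSpace_eq_top [IsAlgClosed k] [FiniteDimensional k M] [IsMulCommutative A]
    (hA : (Nat.card A : k) ≠ 0) : ⨆ χ, weightSpace ρ A χ = ⊤ := by
  have hcomm (a b : A) : Commute (ρ a) (ρ b) := Commute.map (setLike_mul_comm a.2 b.2) ρ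
  have hsemisimple (a : A) : Module.End.IsFinitelySemisimple (ρ a) := by
    refine Module.End.isFinitelySemisimple_iff_isSemisimple.2 <|
      Module.End.isSemisimple_of_squarefree_aeval_eq_zero
        (Polynomial.X_pow_sub_one_separable_iff.2 hA).squarefree ?_
    rw [map_sub, map_pow, Polynomial.aeval_X, map_one, ← map_pow, ← Subgroup.coe_pow,
      pow_card_eq_one', Subgroup.coe_one, map_one, sub_self]
  have hmax (χ : A → k) :
      weightSpace ρ A χ = ⨅ a : A, Module.End.maxGenEigenspace (ρ a) (χ a) :=
    iInf_congr fun a ↦ ((hsemisimple a).maxGenEigenspace_eq_eigenspace _).symm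
  rw [iSup_congr hmax]
  exact Module.End.iSup_iInf_maxGenEigenspace_eq_top_of_iSup_maxGenEigenspace_eq_top_of_commute
    (fun a : A ↦ ρ a) (fun a b _ ↦ hcomm a b) fun a ↦ Module.End.iSup_maxGenEigenspace_eq_top _

lemma commute_of_forall_smul_weight_eq [A.Normal] (h : ⨆ χ, weightSpace ρ A χ = ⊤) {g : G}
    (hg : ∀ χ : Weight ρ A, g • χ = χ) (a : A) : Commute (ρ g) (ρ a) := by
  have hle : ⨆ χ, weightSpace ρ A χ ≤ LinearMap.eqLocus (ρ g * ρ a) (ρ a * ρ g) := by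
    refine iSup_le fun χ ↦ ?_
    rcases eq_or_ne (weightSpace ρ A χ) ⊥ with hχ | hχ
    · exact hχ ▸ bot_le
    intro v hv
    have hgχ : (fun b ↦ χ (MulAut.conjNormal g⁻¹ b)) = χ := congrArg Subtype.val (hg ⟨χ, hχ⟩)
    have hgv : ρ g v ∈ weightSpace ρ A χ := hgχ ▸ map_mem_weightSpace_conj hv g
    change ρ g (ρ a v) = ρ a (ρ g v)
    rw [mem_weightSpace_iff.1 hv, mem_weightSpace_iff.1 hgv, map_smul]
  exact LinearMap.eqLocus_eq_top.1 (top_le_iff.1 (h ▸ hle))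

end Weights

lemma finrank_eigenspace_one_baseChange {F k V : Type*} [Field F] [Field k] [Algebra F k]
    [AddCommGroup V] [Module F V] (f : Module.End F V) :
    finrank k (Module.End.eigenspace (f.baseChange k) 1) = finrank F (f.eigenspace 1) := by
  have h : f.baseChange k - 1 = (f - 1).baseChange k := by
    rw [LinearMap.baseChange_sub, LinearMap.baseChange_one]
  rw [Module.End.eigenspace_def, Module.End.eigenspace_def, one_smul, one_smul, h]
  exact (LinearMap.tensorKerEquiv k k (f - 1)).symm.finrank_eq.trans finrank_baseChange

lemma finrank_eigenspace_one_le_natCard {q : ℕ} [Fact q.Prime] {V : Type*} [AddCommGroup V]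
    [Module (ZMod q) V] [Finite V] (f : Module.End (ZMod q) V) :
    finrank (ZMod q) (f.eigenspace 1) ≤ Nat.card {v : V // f v = v} := by
  have hcard : Nat.card {v : V // f v = v} = Nat.card (f.eigenspace 1) :=
    Nat.card_congr <| Equiv.subtypeEquivRight fun v ↦ by
      rw [Module.End.mem_eigenspace_iff, one_smul]
  rw [hcard, Module.natCard_eq_pow_finrank (K := ZMod q), Nat.card_zmod]
  exact (Nat.lt_pow_self (Fact.out : q.Prime).one_lt).le

section Assembly

variable {p n d : ℕ} {G F V : Type*} [Group G] [Finite G] {φ : G} [Field F]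
  [AddCommGroup V] [Module F V] [FiniteDimensional F V] {A : Subgroup G} [A.Normal]
  [IsMulCommutative A]

lemma commute_of_mem_derivedSeries_of_isAlgClosed [Fact p.Prime] [IsAlgClosed F]
    (hG : IsPGroup p G) (hF : (p : F) ≠ 0) (ρ : Representation F G V)
    (hφ : φ ^ p ^ (n + 1) = 1) (hd : finrank F (Module.End.eigenspace (ρ φ) 1) ≤ d)
    {g a : G} (hg : g ∈ (derivedSeries (Subgroup.normalClosure {φ ^ p ^ n})
      (p * (p ^ (n + 1) * d + 1)).factorial).map (Subgroup.subtype _)) (ha : a ∈ A) :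
    Commute (ρ g) (ρ a) := by
  have htop : ⨆ χ, weightSpace ρ A χ = ⊤ := by
    obtain ⟨b, hb⟩ := (hG.to_subgroup A).exists_card_eq
    refine iSup_weightSpace_eq_top ?_
    rw [hb, Nat.cast_pow]
    exact pow_ne_zero b hF
  have hmoved : (MulAction.fixedBy (Weight ρ A) (φ ^ p ^ n))ᶜ.ncard ≤ p ^ (n + 1) * d :=
    (ncard_compl_fixedBy_pow_le (W := fun χ : Weight ρ A ↦ weightSpace ρ A χ.1)
      (iSupIndep_weightSpace.comp Subtype.val_injective) (fun χ ↦ χ.2)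
      (fun g _ _ hv ↦ map_mem_weightSpace_conj hv g) hφ).trans
      (Nat.mul_le_mul_left _ hd)
  exact commute_of_forall_smul_weight_eq htop
    (fun χ ↦ map_derivedSeries_normalClosure_le_stabilizer hG hmoved χ hg) ⟨a, ha⟩

lemma commute_of_mem_derivedSeries [Fact p.Prime]
    (hG : IsPGroup p G) (hF : (p : F) ≠ 0) (ρ : Representation F G V)
    (hφ : φ ^ p ^ (n + 1) = 1) (hd : finrank F (Module.End.eigenspace (ρ φ) 1) ≤ d)
    {g a : G} (hg : g ∈ (derivedSeries (Subgroup.normalClosure {φ ^ p ^ n})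
      (p * (p ^ (n + 1) * d + 1)).factorial).map (Subgroup.subtype _)) (ha : a ∈ A) :
    Commute (ρ g) (ρ a) := by
  let k := AlgebraicClosure F
  let extend : Module.End F V →ₐ[F] Module.End k (TensorProduct F k V) :=
    Module.End.baseChangeHom F k V
  have hextend : Function.Injective extend := LinearMap.baseChangeHom_injective F V k (N := V)
  let σ : Representation k G (TensorProduct F k V) := (extend : _ →* _).comp ρ
  have hk : (p : k) ≠ 0 := by
    rw [← map_natCast (algebraMap F k)]
    exact (map_ne_zero _).2 hF
  have hσd : finrank k (Module.End.eigenspace (σ φ) 1) ≤ d :=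
    (finrank_eigenspace_one_baseChange (ρ φ)).trans_le hd
  have hσ : Commute (σ g) (σ a) :=
    commute_of_mem_derivedSeries_of_isAlgClosed hG hk σ hφ hσd hg ha
  exact hσ.of_map hextend

lemma exists_isMulCommutative_inf_le [Fact p.Prime] (hG : IsPGroup p G) (hF : (p : F) ≠ 0)
    (ρ : Representation F G V) {N : Subgroup G} [N.Normal] (hρ : Set.InjOn ρ N)
    (hφ : φ ^ p ^ (n + 1) = 1) (hd : finrank F (Module.End.eigenspace (ρ φ) 1) ≤ d) :
    ∃ A : Subgroup G, IsMulCommutative A ∧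
      (derivedSeries (Subgroup.normalClosure {φ ^ p ^ n})
        (p * (p ^ (n + 1) * d + 1)).factorial).map (Subgroup.subtype _) ⊓ N ≤ A := by
  have := hG.isNilpotent
  obtain ⟨A, hA, hA_comm, hCA⟩ := exists_normal_isMulCommutative_centralizer_le G
  refine ⟨A, hA_comm, fun g hg ↦ hCA fun a ha ↦ ?_⟩
  have hga : Commute (ρ g) (ρ a) := commute_of_mem_derivedSeries hG hF ρ hφ hd hg.1 ha
  exact (commute_of_commute_map hρ hg.2 hga).symm

end Assembly

lemma commutatorWithAut_le_comap_inl_normalClosure {K P : Type*} [Group K] [Group P]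
    (θ : K →* MulAut P) (c : K) :
    commutatorWithAut (θ c) ≤ (Subgroup.normalClosure {(SemidirectProduct.inr c : P ⋊[θ] K)}).comap
      SemidirectProduct.inl := by
  refine (Subgroup.closure_le _).2 ?_
  rintro _ ⟨x, rfl⟩
  let a : P ⋊[θ] K := SemidirectProduct.inl x
  let z : P ⋊[θ] K := SemidirectProduct.inr c
  have hz : z ∈ Subgroup.normalClosure {z} := Subgroup.subset_normalClosure rfl
  have hcomm : SemidirectProduct.inl (x⁻¹ * θ c x) = a⁻¹ * z * a * z⁻¹ := by
    rw [map_mul, map_inv, SemidirectProduct.inl_aut, map_inv]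
    simp only [a, z, mul_assoc]
  rw [SetLike.mem_coe, Subgroup.mem_comap, hcomm]
  exact mul_mem (by simpa using Subgroup.normalClosure_normal.conj_mem z hz a⁻¹) (inv_mem hz)

lemma isPGroup_semidirectProduct {K P : Type*} [Group K] [Group P] {p : ℕ} (hP : IsPGroup p P)
    (hK : IsPGroup p K) (θ : K →* MulAut P) : IsPGroup p (P ⋊[θ] K) := by
  intro x
  obtain ⟨i, hi⟩ := hK (SemidirectProduct.rightHom x)
  obtain ⟨y, hy⟩ : x ^ p ^ i ∈ (SemidirectProduct.inl : P →* P ⋊[θ] K).range := by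
    rw [SemidirectProduct.range_inl_eq_ker_rightHom, MonoidHom.mem_ker, map_pow, hi]
  obtain ⟨j, hj⟩ := hP y
  exact ⟨i + j, by rw [pow_add, pow_mul, ← hy, ← map_pow, hj, map_one]⟩

theorem derived_length_of_commutator_with_power_of_automorphism_bounded_general {p n : ℕ}
    (hp : p.Prime) {P : Type*} [Group P] [Finite P] (hP : IsPGroup p P) (φ : MulAut P)
    (hφ : φ ^ p ^ (n + 1) = 1) {F V : Type*} [Field F] (hF : (p : F) ≠ 0) [AddCommGroup V]
    [Module F V] [FiniteDimensional F V]
    (ρ : Representation F (P ⋊[(Subgroup.zpowers φ).subtype] Subgroup.zpowers φ) V)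
    (hρ : Function.Injective (ρ.comp SemidirectProduct.inl)) {d : ℕ}
    (hd : finrank F (Module.End.eigenspace
      (ρ (SemidirectProduct.inr ⟨φ, Subgroup.mem_zpowers φ⟩)) 1) ≤ d) :
    derivedSeries (commutatorWithAut (φ ^ p ^ n))
      ((p * (p ^ (n + 1) * d + 1)).factorial + 1) = ⊥ := by
  have : Fact p.Prime := ⟨hp⟩
  let K := Subgroup.zpowers φ
  let c : K := ⟨φ, Subgroup.mem_zpowers φ⟩
  let inl : P →* P ⋊[K.subtype] K := SemidirectProduct.inl
  let inr : K →* P ⋊[K.subtype] K := SemidirectProduct.inr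
  have hK : IsPGroup p K := .of_card_dvd_pow (Nat.card_zpowers φ ▸ orderOf_dvd_of_pow_eq_one hφ)
  have : Finite (P ⋊[K.subtype] K) := .of_equiv _ SemidirectProduct.equivProd.symm
  have hc : inr c ^ p ^ (n + 1) = 1 := by
    rw [← map_pow, show c ^ p ^ (n + 1) = 1 from Subtype.ext hφ, map_one]
  have hle : commutatorWithAut (φ ^ p ^ n) ≤
      (Subgroup.normalClosure {inr c ^ p ^ n}).comap inl := by
    rw [← map_pow]
    exact commutatorWithAut_le_comap_inl_normalClosure K.subtype (c ^ p ^ n)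
  have hρ_inl : Set.InjOn ρ inl.range := Function.Injective.injOn_range (f := inl) hρ
  have : inl.range.Normal := by
    rw [SemidirectProduct.range_inl_eq_ker_rightHom]
    infer_instance
  obtain ⟨A, hA, hDA⟩ := exists_isMulCommutative_inf_le
    (isPGroup_semidirectProduct hP hK K.subtype) hF ρ hρ_inl hc hd
  refine derivedSeries_succ_eq_bot_of_map_le (f := inl.comp (Subgroup.subtype _)) (A := A)
    (SemidirectProduct.inl_injective.comp Subtype.val_injective) ?_
  refine le_trans (le_inf (map_derivedSeries_subtype_le inl hle _) ?_) hDA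
  rintro _ ⟨x, -, rfl⟩
  exact ⟨x, rfl⟩

theorem derived_length_of_commutator_with_power_of_automorphism_bounded :
    ∃ f : ℕ × ℕ → ℕ, ∀ (p n q : ℕ), p.Prime → 1 ≤ n → q.Prime → q ≠ p →
      ∀ (P : Type) [Group P] [Finite P], IsPGroup p P →
        ∀ φ : MulAut P, orderOf φ = p ^ n →
          ∀ (V : Type) [AddCommGroup V] [Module (ZMod q) V] [Finite V],
            ∀ ρ : Representation (ZMod q)
                (P ⋊[(Subgroup.zpowers φ).subtype] ↥(Subgroup.zpowers φ)) V,
              Function.Injective ρ →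
              derivedSeries ↥(commutatorWithAut (φ ^ p ^ (n - 1)))
                (f (Nat.card {v : V //
                    ρ (SemidirectProduct.inr ⟨φ, Subgroup.mem_zpowers φ⟩) v = v}, p ^ n)) = ⊥ := by
  refine ⟨fun x ↦ (x.2.minFac * (x.2 * x.1 + 1)).factorial + 1, ?_⟩
  intro p n q hp hn hq hqp P _ _ hP φ hφ V _ _ _ ρ hρ
  obtain ⟨n, rfl⟩ := Nat.exists_eq_add_of_le' hn
  have : Fact q.Prime := ⟨hq⟩
  have hp₀ : (p : ZMod q) ≠ 0 := by
    rwa [Ne, ZMod.natCast_eq_zero_iff, Nat.prime_dvd_prime_iff_eq hq hp]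
  dsimp only
  rw [hp.pow_minFac n.succ_ne_zero, Nat.add_sub_cancel]
  exact derived_length_of_commutator_with_power_of_automorphism_bounded_general hp hP φ
    (hφ ▸ pow_orderOf_eq_one φ) hp₀ ρ (hρ.comp SemidirectProduct.inl_injective)
    (finrank_eigenspace_one_le_natCard _)
end

section
/- There exists a function f : ℕ × ℕ × ℕ → ℕ with the following property: for every prime p and natural numbers n, m, if a finite p-soluble group G admits an automorphism φ of order p^n and a φ-invariant Sylow p-subgroup P of G satisfies |C_P(φ)| = p^m, then the p-length of G is at most f(p, n, m). -/
/-- A normal series of `G` (each term normal in `G`) each of whose factors is either a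
`p`-group or a `p'`-group. -/
def IsPPrimePSeries (p : ℕ) {G : Type*} [Group G] (H : ℕ → Subgroup G) (k : ℕ) : Prop :=
  H 0 = ⊥ ∧ H k = ⊤ ∧ (∀ i, (H i).Normal) ∧ (∀ i, H i ≤ H (i + 1)) ∧
    ∀ i < k, (∃ j : ℕ, Nat.card (H (i + 1) ⧸ (H i).subgroupOf (H (i + 1))) = p ^ j) ∨
      ¬ p ∣ Nat.card (H (i + 1) ⧸ (H i).subgroupOf (H (i + 1)))

/-- A finite group is `p`-soluble iff it has a normal series each of whose factors is a
`p`-group or a `p'`-group. -/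
def IsPSoluble (p : ℕ) (G : Type*) [Group G] : Prop :=
  ∃ (k : ℕ) (H : ℕ → Subgroup G), IsPPrimePSeries p H k

/-- The `p`-length of `G` is at most `N`: there is a normal series with `p`- or `p'`-factors
having at most `N` factors of order divisible by `p` (i.e. at most `N` nontrivial
`p`-factors). -/
def PLengthLE (p : ℕ) (G : Type*) [Group G] (N : ℕ) : Prop :=
  ∃ (k : ℕ) (H : ℕ → Subgroup G), IsPPrimePSeries p H k ∧
    ((Finset.range k).filter
      (fun i => p ∣ Nat.card (H (i + 1) ⧸ (H i).subgroupOf (H (i + 1))))).card ≤ N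

/-!
Dividing by `O_{p'}(G)` preserves the `p`-length and does not create more fixed points in the
Sylow subgroup, so assume `O_{p'}(G) = 1` and let `T = O_p(G)`. By the Hall–Higman lemma `T`
contains its own centralizer, and only a `p`-group of automorphisms of `T` acts trivially on
`T / Φ(T)`; hence the kernel of the action of `G` on `T / Φ(T)` is a `p`-group, and the `p`-length
of `G` is bounded in terms of `|T / Φ(T)|`. On the elementary abelian group `T / Φ(T)` we have
`(φ - 1) ^ p ^ n = φ ^ p ^ n - 1 = 0`, so `|T / Φ(T)|` is at most the `p ^ n`-th power of the
number of fixed points of `φ` on it, and this number is at most `|C_P(φ)|`.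
-/

/-! ### Fixed points in quotients -/

section FixedPoints

variable {G Q : Type*} [Group G] [Group Q]

lemma card_mul_relIndex {H K : Subgroup G} (h : H ≤ K) :
    Nat.card H * H.relIndex K = Nat.card K := by
  rw [← Subgroup.relIndex_bot_left, ← Subgroup.relIndex_bot_left,
    Subgroup.relIndex_mul_relIndex _ _ _ bot_le h]

lemma card_ker_inf_mul_card_map (f : G →* Q) (K : Subgroup G) :
    Nat.card ↥(f.ker ⊓ K) * Nat.card (K.map f) = Nat.card K := by
  rw [← Subgroup.relIndex_ker, ← Subgroup.inf_relIndex_right, card_mul_relIndex inf_le_right]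

/-- The subgroup `C_G(α)` of fixed points of an endomorphism `α` of `G`. -/
def fixedSubgroup (α : G →* G) : Subgroup G := α.eqLocus (MonoidHom.id G)

lemma mem_fixedSubgroup {α : G →* G} {x : G} : x ∈ fixedSubgroup α ↔ α x = x := Iff.rfl

lemma inv_mul_mem_fixedSubgroup_iff {α : G →* G} {a b : G} :
    a⁻¹ * b ∈ fixedSubgroup α ↔ a * (α a)⁻¹ = b * (α b)⁻¹ := by
  rw [mem_fixedSubgroup, map_mul, map_inv, eq_comm, inv_mul_eq_iff_eq_mul, ← mul_assoc,
    ← mul_inv_eq_iff_eq_mul, eq_comm]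

lemma relIndex_fixedSubgroup_le {α : G →* G} {P N : Subgroup G} [Finite N]
    (h : ∀ x ∈ P, x * (α x)⁻¹ ∈ N) : (fixedSubgroup α).relIndex P ≤ Nat.card N := by
  refine Nat.card_le_card_of_injective
    (fun q : P ⧸ (fixedSubgroup α).subgroupOf P => (⟨q.out * (α q.out)⁻¹, h _ q.out.2⟩ : N))
    fun q r hqr => ?_
  rw [← QuotientGroup.out_eq' q, ← QuotientGroup.out_eq' r]
  exact QuotientGroup.eq.2 (inv_mul_mem_fixedSubgroup_iff.2 (congrArg Subtype.val hqr))

-- The elements of `P` lying over `C(β)` are moved by `α` inside their coset of `ker f`.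
lemma card_map_inf_fixedSubgroup_le (f : G →* Q) {α : G →* G} {β : Q →* Q}
    (hf : ∀ x, f (α x) = β (f x)) {P : Subgroup G} [Finite P] (hP : P.map α ≤ P) :
    Nat.card ↥(P.map f ⊓ fixedSubgroup β) ≤ Nat.card ↥(P ⊓ fixedSubgroup α) := by
  set D := P ⊓ (fixedSubgroup β).comap f
  have : Finite D := Set.Finite.subset ‹Finite P› inf_le_left
  have : Finite ↥(f.ker ⊓ D) := Set.Finite.subset ‹Finite D› inf_le_right
  have hD : P ⊓ fixedSubgroup α ≤ D := fun x ⟨hxP, hx⟩ =>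
    ⟨hxP, show β (f x) = f x by rw [← hf, mem_fixedSubgroup.1 hx]⟩
  have hmove : ∀ x ∈ D, x * (α x)⁻¹ ∈ f.ker ⊓ D := by
    rintro x ⟨hxP, hx⟩
    have hαx : f (α x) = f x := (hf x).trans hx
    have hker : x * (α x)⁻¹ ∈ f.ker := by simp [hαx]
    refine ⟨hker, P.mul_mem hxP (P.inv_mem (hP ⟨x, hxP, rfl⟩)), ?_⟩
    exact Subgroup.mem_comap.2 (MonoidHom.mem_ker.1 hker ▸ one_mem _)
  have hfix : P ⊓ fixedSubgroup α = fixedSubgroup α ⊓ D :=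
    le_antisymm (le_inf inf_le_right hD) (inf_comm P _ ▸ inf_le_inf_left _ inf_le_left)
  have hcard : Nat.card D ≤ Nat.card ↥(P ⊓ fixedSubgroup α) * Nat.card ↥(f.ker ⊓ D) := by
    rw [← card_mul_relIndex hD]
    gcongr
    rw [hfix, Subgroup.inf_relIndex_right]
    exact relIndex_fixedSubgroup_le hmove
  have hmap : D.map f = P.map f ⊓ fixedSubgroup β :=
    SetLike.coe_injective (Set.image_inter_preimage f P (fixedSubgroup β))
  rw [← card_ker_inf_mul_card_map f, hmap, mul_comm] at hcard
  exact Nat.le_of_mul_le_mul_right hcard Nat.card_pos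

lemma card_fixedSubgroup_characteristic (N : Subgroup G) [N.Characteristic] (φ : MulAut G) :
    Nat.card (fixedSubgroup (MulAut.characteristic N φ).toMonoidHom) =
      Nat.card ↥(N ⊓ fixedSubgroup φ.toMonoidHom) := by
  have h : fixedSubgroup (MulAut.characteristic N φ).toMonoidHom =
      (fixedSubgroup φ.toMonoidHom).subgroupOf N :=
    Subgroup.ext fun _ => Subtype.ext_iff
  rw [h, ← Subgroup.card_map_of_injective N.subtype_injective, Subgroup.subgroupOf_map_subtype,
    inf_comm]

end FixedPoints

/-! ### Unipotent endomorphisms of elementary abelian groups -/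

section Unipotent

lemma card_ker_pow_le {G : Type*} [Group G] [Finite G] (α : Monoid.End G) (k : ℕ) :
    Nat.card (MonoidHom.ker (α ^ k)) ≤ Nat.card (MonoidHom.ker α) ^ k := by
  induction k with
  | zero => exact (Subgroup.card_eq_one.2 MonoidHom.ker_id).le
  | succ k ih =>
    set K := MonoidHom.ker (α ^ (k + 1)) with hK
    have hmap : K.map α ≤ MonoidHom.ker (α ^ k) := by
      rintro - ⟨x, hx, rfl⟩
      rwa [hK, pow_succ] at hx
    calc Nat.card K = Nat.card ↥(MonoidHom.ker α ⊓ K) * Nat.card (K.map α) :=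
          (card_ker_inf_mul_card_map α K).symm
      _ ≤ Nat.card (MonoidHom.ker α) * Nat.card (MonoidHom.ker (α ^ k)) := by
          gcongr
          · exact Subgroup.card_le_of_le inf_le_left
          · exact Subgroup.card_le_of_le hmap
      _ ≤ Nat.card (MonoidHom.ker α) ^ (k + 1) := by rw [pow_succ']; gcongr

lemma sub_one_pow_prime_pow_eq_zero {R : Type*} [Ring R] {p n : ℕ} (hp : p.Prime)
    (h0 : (p : R) = 0) {a : R} (ha : a ^ p ^ n = 1) : (a - 1) ^ p ^ n = 0 := by
  obtain ⟨r, hr⟩ := (Commute.one_right (a - 1)).exists_add_pow_prime_pow_eq hp n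
  simpa [h0, ha] using hr

lemma card_le_card_fixedSubgroup_pow {V : Type*} [CommGroup V] [Finite V] {p n : ℕ}
    (hp : p.Prime) (hV : ∀ v : V, v ^ p = 1) {α : Monoid.End V} (hα : α ^ p ^ n = 1) :
    Nat.card V ≤ Nat.card (fixedSubgroup α) ^ p ^ n := by
  let e := monoidEndToAdditive V
  have h0 : (p : AddMonoid.End (Additive V)) = 0 := by
    ext v
    simpa using hV v.toMul
  let β : Monoid.End V := e.symm (e α - 1)
  have hβ : MonoidHom.ker (β ^ p ^ n) = ⊤ := by
    rw [← map_pow, sub_one_pow_prime_pow_eq_zero hp h0 (by rw [← map_pow, hα, map_one])]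
    exact MonoidHom.ker_one
  have hker : MonoidHom.ker β = fixedSubgroup α := Subgroup.ext fun _ => div_eq_one
  rw [← Subgroup.card_top, ← hβ, ← hker]
  exact card_ker_pow_le β (p ^ n)

end Unipotent

/-! ### The Frattini quotient of a `p`-group -/

section Frattini

variable {T : Type*} [Group T]

lemma le_frattini_iff {H : Subgroup T} :
    H ≤ frattini T ↔ ∀ M : Subgroup T, IsCoatom M → H ≤ M := by
  simp [frattini, Order.radical]

variable {p : ℕ} [hp : Fact p.Prime] [Finite T]

lemma index_eq_of_isCoatom_of_isPGroup (hT : IsPGroup p T) {M : Subgroup T} (hM : IsCoatom M) :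
    M.index = p := by
  obtain ⟨k, hk⟩ := IsPGroup.iff_card.1 (hT.to_subgroup M)
  have hdvd : p ∣ M.index := by
    obtain ⟨j, hj⟩ := hT.index M
    have hj0 : j ≠ 0 := by
      rintro rfl
      exact hM.1 (Subgroup.index_eq_one.1 hj)
    exact hj ▸ dvd_pow_self p hj0
  obtain ⟨K, hK, hMK⟩ := Sylow.exists_subgroup_card_pow_succ
    (by rw [pow_succ, ← M.card_mul_index, hk]; exact mul_dvd_mul_left _ hdvd) hk
  have hne : M ≠ K := by
    rintro rfl
    exact k.succ_ne_self (Nat.pow_right_injective hp.out.two_le (hK.symm.trans hk))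
  obtain rfl : K = ⊤ := hM.2 K (hMK.lt_of_ne hne)
  have hcard := M.card_mul_index
  rw [← Subgroup.card_top (G := T), hK, hk, pow_succ] at hcard
  exact Nat.eq_of_mul_eq_mul_left (pow_pos hp.out.pos k) hcard

lemma normal_of_isCoatom_of_isPGroup (hT : IsPGroup p T) {M : Subgroup T} (hM : IsCoatom M) :
    M.Normal :=
  have := hT.isNilpotent
  Subgroup.NormalizerCondition.normal_of_coatom M Group.normalizerCondition_of_isNilpotent hM

lemma commutator_le_frattini (hT : IsPGroup p T) : commutator T ≤ frattini T := by
  refine le_frattini_iff.2 fun M hM => ?_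
  have := normal_of_isCoatom_of_isPGroup hT hM
  have := isCyclic_of_prime_card (index_eq_of_isCoatom_of_isPGroup hT hM)
  exact Subgroup.Normal.quotient_commutative_iff_commutator_le.1 inferInstance

lemma pow_mem_frattini (hT : IsPGroup p T) (t : T) : t ^ p ∈ frattini T := by
  rw [← Subgroup.zpowers_le, le_frattini_iff]
  intro M hM
  have := normal_of_isCoatom_of_isPGroup hT hM
  rw [Subgroup.zpowers_le, ← index_eq_of_isCoatom_of_isPGroup hT hM]
  exact M.pow_index_mem t

end Frattini

section CoprimeAction

variable {A T : Type*} [Group A] [Group T] [MulDistribMulAction A T] {q : ℕ} [Fact q.Prime]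

-- `A` permutes each coset of `N`, hence fixes a point of it.
lemma fixedPoints_sup_eq_top_of_not_dvd_card (hA : IsPGroup q A) {N : Subgroup T}
    (hq : ¬ q ∣ Nat.card N) (h : ∀ (a : A) (t : T), t⁻¹ * a • t ∈ N) :
    FixedPoints.subgroup A T ⊔ N = ⊤ := by
  refine (Subgroup.eq_top_iff' _).2 fun t => ?_
  let X : SubMulAction A T :=
    { carrier := {x | t⁻¹ * x ∈ N}
      smul_mem' := fun a x hx => by simpa [mul_assoc] using N.mul_mem hx (h a x) }
  have hX : Nat.card X = Nat.card N :=
    Nat.card_congr ((Equiv.mulLeft t⁻¹).subtypeEquiv fun _ => Iff.rfl)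
  obtain ⟨x, hx⟩ := hA.nonempty_fixed_point_of_prime_not_dvd_card X (hX ▸ hq)
  have hxt : (x : T)⁻¹ * t ∈ N := by simpa using N.inv_mem x.2
  rw [← mul_inv_cancel_left (x : T) t]
  exact Subgroup.mul_mem_sup (fun a => congrArg Subtype.val (hx a)) hxt

lemma smul_eq_self_of_trivial_mod_frattini [IsCoatomic (Subgroup T)] (hA : IsPGroup q A)
    (hq : ¬ q ∣ Nat.card (frattini T)) (h : ∀ (a : A) (t : T), t⁻¹ * a • t ∈ frattini T)
    (a : A) (t : T) : a • t = t := by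
  have htop : FixedPoints.subgroup A T = ⊤ :=
    frattini_nongenerating (fixedPoints_sup_eq_top_of_not_dvd_card hA hq h)
  exact (htop ▸ Subgroup.mem_top t : t ∈ FixedPoints.subgroup A T) a

end CoprimeAction

/-- The homomorphism `Aut G → Aut (G ⧸ N)` for a characteristic subgroup `N` of `G`. -/
def quotientAut {G : Type*} [Group G] (N : Subgroup G) [N.Characteristic] :
    MulAut G →* MulAut (G ⧸ N) where
  toFun α := QuotientGroup.congr N N α (Subgroup.characteristic_iff_map_eq.1 inferInstance α)
  map_one' := by ext ⟨x⟩; rfl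
  map_mul' _ _ := by ext ⟨x⟩; rfl

lemma isPGroup_ker_quotientAut_frattini {p : ℕ} [hp : Fact p.Prime] {T : Type*} [Group T]
    [Finite T] (hT : IsPGroup p T) : IsPGroup p (quotientAut (frattini T)).ker := by
  rw [isPGroup_iff_primeFactors_card_subset hp.out.ne_zero, hp.out.primeFactors]
  intro q hq
  rw [Finset.mem_singleton]
  have hqp := Nat.prime_of_mem_primeFactors hq
  have := Fact.mk hqp
  by_contra hne
  obtain ⟨⟨α, hα⟩, ho⟩ := exists_prime_orderOf_dvd_card' q (Nat.dvd_of_mem_primeFactors hq)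
  rw [Subgroup.orderOf_mk] at ho
  have hA : IsPGroup q (Subgroup.zpowers α) := IsPGroup.of_card (n := 1) (by simp [ho])
  have hndvd : ¬ q ∣ Nat.card (frattini T) := by
    obtain ⟨j, hj⟩ := IsPGroup.iff_card.1 (hT.to_subgroup (frattini T))
    rw [hj]
    exact fun h => hne ((Nat.prime_dvd_prime_iff_eq hqp hp.out).1 (hqp.dvd_of_dvd_pow h))
  have htriv : ∀ (β : Subgroup.zpowers α) (t : T), t⁻¹ * β • t ∈ frattini T := by
    rintro ⟨β, hβ⟩ t
    have hβ1 : quotientAut (frattini T) β = 1 := (Subgroup.zpowers_le.2 hα) hβ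
    rw [← QuotientGroup.eq]
    exact (DFunLike.congr_fun hβ1 (t : T ⧸ frattini T)).symm
  have hα1 : α = 1 := MulEquiv.ext fun t =>
    smul_eq_self_of_trivial_mod_frattini hA hndvd htriv ⟨α, Subgroup.mem_zpowers α⟩ t
  exact hqp.one_lt.ne (by rw [← ho, hα1, orderOf_one])

lemma card_quotient_frattini_le {p n : ℕ} [hp : Fact p.Prime] {T : Type*} [Group T] [Finite T]
    (hT : IsPGroup p T) {φ : MulAut T} (hφ : φ ^ p ^ n = 1) :
    Nat.card (T ⧸ frattini T) ≤ Nat.card (fixedSubgroup φ.toMonoidHom) ^ p ^ n := by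
  have hcomm := Subgroup.Normal.quotient_commutative_iff_commutator_le.2 (commutator_le_frattini hT)
  let : CommGroup (T ⧸ frattini T) := { mul_comm := hcomm.is_comm.comm }
  let β := MulDistribMulAction.toMonoidEnd _ (T ⧸ frattini T) (quotientAut (frattini T) φ)
  have hβ : β ^ p ^ n = 1 := by rw [← map_pow, ← map_pow, hφ, map_one, map_one]
  have hexp : ∀ v : T ⧸ frattini T, v ^ p = 1 := by
    rintro ⟨t⟩
    exact (QuotientGroup.eq_one_iff _).2 (pow_mem_frattini hT t)
  refine (card_le_card_fixedSubgroup_pow hp.out hexp hβ).trans ?_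
  gcongr
  have hle := card_map_inf_fixedSubgroup_le (QuotientGroup.mk' (frattini T))
    (α := φ.toMonoidHom) (β := β) (fun _ => rfl) (P := ⊤) le_top
  rwa [Subgroup.map_top_of_surjective _ (QuotientGroup.mk'_surjective _), top_inf_eq,
    top_inf_eq] at hle

/-! ### The subgroups `O_p(G)` and `O_{p'}(G)` -/

section Cores

variable (p : ℕ) (G : Type*) [Group G]

/-- The `p`-core `O_p(G)`, the largest normal `p`-subgroup of `G`. -/
def pCore : Subgroup G := sSup {N | N.Normal ∧ IsPGroup p N}

/-- The `p'`-core `O_{p'}(G)` of a finite group `G`, the largest normal subgroup of order prime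
to `p`. -/
def pPrimeCore : Subgroup G := sSup {N | N.Normal ∧ ¬ p ∣ Nat.card N}

variable {p G}

lemma le_pCore {N : Subgroup G} (hn : N.Normal) (hN : IsPGroup p N) : N ≤ pCore p G :=
  le_sSup ⟨hn, hN⟩

lemma le_pPrimeCore {N : Subgroup G} (hn : N.Normal) (hN : ¬ p ∣ Nat.card N) :
    N ≤ pPrimeCore p G :=
  le_sSup ⟨hn, hN⟩

lemma isPGroup_pCore : IsPGroup p (pCore p G) :=
  Sylow.sSup_of_normal _ (fun _ hN => hN.2) fun _ hN => hN.1

lemma characteristic_sSup {S : Set (Subgroup G)}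
    (hS : ∀ φ : G ≃* G, ∀ N ∈ S, N.map φ.toMonoidHom ∈ S) : (sSup S).Characteristic :=
  Subgroup.characteristic_iff_map_le.2 fun φ => Subgroup.map_le_iff_le_comap.2 <|
    sSup_le fun N hN => Subgroup.map_le_iff_le_comap.1 (le_sSup (hS φ N hN))

instance pCore_characteristic : (pCore p G).Characteristic :=
  characteristic_sSup fun φ _ hN => ⟨hN.1.map _ φ.surjective, hN.2.map _⟩

lemma pCore_le_sylow (P : Sylow p G) : pCore p G ≤ P :=
  isPGroup_pCore.le_sylow_of_normal P

instance pPrimeCore_characteristic : (pPrimeCore p G).Characteristic :=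
  characteristic_sSup fun φ N hN => ⟨hN.1.map _ φ.surjective,
    (Subgroup.card_map_of_injective (K := N) (f := φ.toMonoidHom) φ.injective).symm ▸ hN.2⟩

lemma not_dvd_card_sup (hp : p.Prime) {H N : Subgroup G} [N.Normal] (hH : ¬ p ∣ Nat.card H)
    (hN : ¬ p ∣ Nat.card N) : ¬ p ∣ Nat.card ↥(H ⊔ N) := by
  rw [← card_mul_relIndex (le_sup_right : N ≤ H ⊔ N), Subgroup.relIndex_sup_right, hp.dvd_mul]
  exact not_or_intro hN fun h => hH (h.trans (N.relIndex_dvd_card H))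

variable [Finite G]

lemma not_dvd_card_pPrimeCore (hp : p.Prime) : ¬ p ∣ Nat.card (pPrimeCore p G) := by
  have hsup : SupClosed {N : Subgroup G | N.Normal ∧ ¬ p ∣ Nat.card N} := by
    rintro M ⟨hMn, hM⟩ N ⟨hNn, hN⟩
    exact ⟨inferInstance, not_dvd_card_sup hp hM hN⟩
  exact (hsup.sSup_mem (Set.toFinite _) ⟨inferInstance, by simp [hp.ne_one]⟩ subset_rfl).2

lemma pPrimeCore_quotient_pPrimeCore (hp : p.Prime) :
    pPrimeCore p (G ⧸ pPrimeCore p G) = ⊥ := by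
  set f := QuotientGroup.mk' (pPrimeCore p G)
  have hf : Function.Surjective f := QuotientGroup.mk'_surjective _
  have hker : f.ker = pPrimeCore p G := QuotientGroup.ker_mk' _
  have hle : (pPrimeCore p (G ⧸ pPrimeCore p G)).comap f ≤ f.ker := by
    refine (le_pPrimeCore inferInstance ?_).trans_eq hker.symm
    rw [← card_ker_inf_mul_card_map f, Subgroup.map_comap_eq_self_of_surjective hf, hp.dvd_mul,
      hker]
    exact not_or_intro (fun h => not_dvd_card_pPrimeCore hp (h.trans
      (Subgroup.card_dvd_of_le inf_le_left))) (not_dvd_card_pPrimeCore hp)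
  rw [← Subgroup.map_comap_eq_self_of_surjective hf (pPrimeCore p _)]
  exact (Subgroup.map_eq_bot_iff _).2 hle

lemma pPrimeCore_subgroup_eq_bot (hp : p.Prime) (hG : pPrimeCore p G = ⊥) {N : Subgroup G}
    [N.Normal] : pPrimeCore p N = ⊥ := by
  have hle : (pPrimeCore p N).map N.subtype ≤ pPrimeCore p G :=
    le_pPrimeCore inferInstance <| by
      rw [Subgroup.card_map_of_injective N.subtype_injective]
      exact not_dvd_card_pPrimeCore hp
  rwa [hG, le_bot_iff, Subgroup.map_eq_bot_iff_of_injective _ N.subtype_injective] at hle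

end Cores

/-! ### Series with `p`- and `p'`-factors -/

section PSeries

variable {p : ℕ} {G : Type*} [Group G]

lemma isPPrimePSeries_iff {H : ℕ → Subgroup G} {k : ℕ} : IsPPrimePSeries p H k ↔
    H 0 = ⊥ ∧ H k = ⊤ ∧ (∀ i, (H i).Normal) ∧ (∀ i, H i ≤ H (i + 1)) ∧
      ∀ i < k, (∃ j : ℕ, (H i).relIndex (H (i + 1)) = p ^ j) ∨
        ¬ p ∣ (H i).relIndex (H (i + 1)) :=
  Iff.rfl

lemma pLengthLE_iff {N : ℕ} : PLengthLE p G N ↔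
    ∃ (k : ℕ) (H : ℕ → Subgroup G), IsPPrimePSeries p H k ∧
      ((Finset.range k).filter fun i => p ∣ (H i).relIndex (H (i + 1))).card ≤ N :=
  Iff.rfl

lemma eq_prime_pow_or_not_dvd_of_dvd {a b : ℕ} (hp : p.Prime) (hab : a ∣ b)
    (h : (∃ j : ℕ, b = p ^ j) ∨ ¬ p ∣ b) : (∃ j : ℕ, a = p ^ j) ∨ ¬ p ∣ a :=
  h.imp (fun ⟨_, hj⟩ => ((Nat.dvd_prime_pow hp).1 (hj ▸ hab)).imp fun _ => And.right)
    fun hb ha => hb (ha.trans hab)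

lemma relIndex_sup_sup_dvd {A B : Subgroup G} [A.Normal] (h : A ≤ B) (N : Subgroup G)
    [N.Normal] : (A ⊔ N).relIndex (B ⊔ N) ∣ A.relIndex B := by
  rw [← sup_eq_left.2 h, sup_assoc, Subgroup.relIndex_sup_right, sup_eq_left.2 h]
  exact Subgroup.relIndex_dvd_of_le_left _ le_sup_left

lemma IsPSoluble.quotient (hp : p.Prime) (h : IsPSoluble p G) (N : Subgroup G) [N.Normal] :
    IsPSoluble p (G ⧸ N) := by
  obtain ⟨k, H, h0, hk, hn, hle, hf⟩ := h
  have hmk : Function.Surjective (QuotientGroup.mk' N) := QuotientGroup.mk'_surjective N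
  refine ⟨k, fun i => (H i).map (QuotientGroup.mk' N), isPPrimePSeries_iff.2 ⟨by simp [h0],
    by simp only [hk, Subgroup.map_top_of_surjective _ hmk], fun i => (hn i).map _ hmk,
    fun i => Subgroup.map_mono (hle i), fun i hi => ?_⟩⟩
  have := hn i
  refine eq_prime_pow_or_not_dvd_of_dvd hp ?_ (hf i hi)
  rw [Subgroup.relIndex_map_map, QuotientGroup.ker_mk']
  exact relIndex_sup_sup_dvd (hle i) N

lemma PLengthLE.mono {a b : ℕ} (h : PLengthLE p G a) (hab : a ≤ b) : PLengthLE p G b :=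
  let ⟨k, H, hH, hcard⟩ := h
  ⟨k, H, hH, hcard.trans hab⟩

lemma pow_card_filter_dvd_card {H : ℕ → Subgroup G} (hH : ∀ i, H i ≤ H (i + 1)) (k : ℕ) :
    p ^ ((Finset.range k).filter fun i => p ∣ (H i).relIndex (H (i + 1))).card ∣
      Nat.card (H k) := by
  induction k with
  | zero => simp
  | succ k ih =>
    rw [← card_mul_relIndex (hH k), Finset.range_add_one, Finset.filter_insert]
    split_ifs with hd
    · rw [Finset.card_insert_of_notMem (by simp), pow_succ]
      exact mul_dvd_mul ih hd
    · exact ih.mul_right _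

lemma IsPSoluble.pLengthLE_card [Finite G] (hp : 1 < p) (h : IsPSoluble p G) :
    PLengthLE p G (Nat.card G) := by
  obtain ⟨k, H, hH⟩ := h
  refine pLengthLE_iff.2
    ⟨k, H, hH, (Nat.lt_pow_self hp).le.trans (Nat.le_of_dvd Nat.card_pos ?_)⟩
  simpa only [hH.2.1, Subgroup.card_top] using pow_card_filter_dvd_card hH.2.2.2.1 k

/-- The series `1 ≤ N ≤ …` of `G` obtained by pulling back a series `H` of `G ⧸ N`; the index is
shifted by one to make room for the bottom term. -/
def comapSeries (N : Subgroup G) [N.Normal] (H : ℕ → Subgroup (G ⧸ N)) : ℕ → Subgroup G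
  | 0 => ⊥
  | i + 1 => (H i).comap (QuotientGroup.mk' N)

variable {N : Subgroup G} [N.Normal]

lemma relIndex_comapSeries_zero {H : ℕ → Subgroup (G ⧸ N)} (h0 : H 0 = ⊥) :
    (comapSeries N H 0).relIndex (comapSeries N H 1) = Nat.card N := by
  simp [comapSeries, h0, MonoidHom.comap_bot]

lemma relIndex_comapSeries_succ (H : ℕ → Subgroup (G ⧸ N)) (i : ℕ) :
    (comapSeries N H (i + 1)).relIndex (comapSeries N H (i + 2)) =
      (H i).relIndex (H (i + 1)) := by
  simp only [comapSeries]
  rw [Subgroup.relIndex_comap,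
    Subgroup.map_comap_eq_self_of_surjective (QuotientGroup.mk'_surjective N)]

lemma isPPrimePSeries_comapSeries (hN : (∃ j, Nat.card N = p ^ j) ∨ ¬ p ∣ Nat.card N)
    {H : ℕ → Subgroup (G ⧸ N)} {k : ℕ} (hH : IsPPrimePSeries p H k) :
    IsPPrimePSeries p (comapSeries N H) (k + 1) := by
  obtain ⟨h0, hk, hn, hle, hf⟩ := hH
  refine isPPrimePSeries_iff.2 ⟨rfl, by simp [comapSeries, hk], ?_, ?_, ?_⟩
  · rintro (_ | i)
    exacts [inferInstanceAs (⊥ : Subgroup G).Normal, (hn i).comap _]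
  · rintro (_ | i)
    exacts [bot_le, Subgroup.comap_mono (hle i)]
  · rintro (_ | i) hi
    · rwa [relIndex_comapSeries_zero h0]
    · rw [relIndex_comapSeries_succ]
      exact hf i (Nat.lt_of_succ_lt_succ hi)

lemma PLengthLE.of_quotient (hN : (∃ j, Nat.card N = p ^ j) ∨ ¬ p ∣ Nat.card N) {a : ℕ}
    (h : PLengthLE p (G ⧸ N) a) : PLengthLE p G (a + if p ∣ Nat.card N then 1 else 0) := by
  obtain ⟨k, H, hH, hcard⟩ := h
  refine pLengthLE_iff.2 ⟨k + 1, comapSeries N H, isPPrimePSeries_comapSeries hN hH, ?_⟩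
  rw [Finset.card_filter, Finset.sum_range_succ', relIndex_comapSeries_zero hH.1]
  simp only [relIndex_comapSeries_succ]
  rw [← Finset.card_filter]
  gcongr
  exact hcard

end PSeries

/-! ### The Hall–Higman lemma -/

section HallHigman

variable {G : Type*} [Group G]

lemma relIndex_dvd_relIndex_of_le {A B D : Subgroup G} [A.Normal] (hAB : A ≤ B) (hDB : D ≤ B) :
    A.relIndex D ∣ A.relIndex B := by
  rw [← Subgroup.relIndex_sup_right]
  exact Dvd.intro _
    (Subgroup.relIndex_mul_relIndex A (D ⊔ A) B le_sup_right (sup_le hDB hAB))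

lemma relIndex_inf_inf_dvd {A B : Subgroup G} [A.Normal] (h : A ≤ B) (C : Subgroup G) :
    (C ⊓ A).relIndex (C ⊓ B) ∣ A.relIndex B := by
  have hinf : C ⊓ A = A ⊓ (C ⊓ B) := by rw [inf_left_comm, inf_eq_left.2 h]
  rw [hinf, Subgroup.inf_relIndex_right]
  exact relIndex_dvd_relIndex_of_le h inf_le_right

lemma normal_of_isComplement'_of_le_center {A K : Subgroup G} (hA : A ≤ Subgroup.center G)
    (h : A.IsComplement' K) : K.Normal := by
  rw [← Subgroup.normalizer_eq_top_iff, eq_top_iff, ← h.sup_eq_top]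
  exact sup_le (hA.trans (Subgroup.center_le_normalizer _)) Subgroup.le_normalizer

variable {p : ℕ} [hp : Fact p.Prime] [Finite G]

lemma isPGroup_of_relIndex_eq_pow {A D : Subgroup G} (h : A ≤ D) (hA : IsPGroup p A) {j : ℕ}
    (hj : A.relIndex D = p ^ j) : IsPGroup p D := by
  obtain ⟨k, hk⟩ := IsPGroup.iff_card.1 hA
  exact IsPGroup.of_card (n := k + j) (by rw [← card_mul_relIndex h, hk, hj, pow_add])

-- By Schur–Zassenhaus `A` has a complement, which is a normal `p'`-subgroup as `A` is central.
lemma eq_top_of_le_center_of_not_dvd_index (hG : pPrimeCore p G = ⊥) {A : Subgroup G}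
    (hA : IsPGroup p A) (hc : A ≤ Subgroup.center G) (hi : ¬ p ∣ A.index) : A = ⊤ := by
  have : A.Normal :=
    ⟨fun a ha g => by rwa [Subgroup.mem_center_iff.1 (hc ha) g, mul_inv_cancel_right]⟩
  obtain ⟨k, hk⟩ := IsPGroup.iff_card.1 hA
  obtain ⟨K, hK⟩ := Subgroup.exists_right_complement'_of_coprime
    (hk ▸ (Nat.Prime.coprime_pow_of_not_dvd hp.out hi).symm)
  have hKb : K = ⊥ := by
    rw [← le_bot_iff, ← hG]
    exact le_pPrimeCore (normal_of_isComplement'_of_le_center hc hK)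
      (by rwa [← hK.symm.index_eq_card])
  simpa [hKb] using hK.sup_eq_top

lemma le_of_le_centralizer_of_not_dvd_relIndex (hG : pPrimeCore p G = ⊥) {A D : Subgroup G}
    [D.Normal] (hD : D ≤ Subgroup.centralizer (pCore p G)) (hA : A ≤ pCore p G)
    (hi : ¬ p ∣ A.relIndex D) : D ≤ A := by
  rw [← Subgroup.subgroupOf_eq_top]
  refine eq_top_of_le_center_of_not_dvd_index (pPrimeCore_subgroup_eq_bot hp.out hG)
    (isPGroup_pCore.to_le hA).comap_subtype ?_ hi
  intro a ha
  rw [Subgroup.mem_center_iff]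
  exact fun d => Subtype.ext (Subgroup.mem_centralizer_iff.1 (hD d.2) a (hA ha)).symm

theorem centralizer_pCore_le (hG : IsPSoluble p G) (hG' : pPrimeCore p G = ⊥) :
    Subgroup.centralizer (pCore p G : Set G) ≤ pCore p G := by
  obtain ⟨k, H, h0, hk, hn, hle, hf⟩ := hG
  set C := Subgroup.centralizer (pCore p G : Set G)
  suffices h : ∀ i ≤ k, C ⊓ H i ≤ pCore p G by simpa [hk] using h k le_rfl
  intro i
  induction i with
  | zero => simp [h0]
  | succ i ih =>
    intro hi
    have := hn i
    have := hn (i + 1)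
    have hA : C ⊓ H i ≤ pCore p G := ih (Nat.le_of_succ_le hi)
    have hAD : C ⊓ H i ≤ C ⊓ H (i + 1) := inf_le_inf_left C (hle i)
    rcases eq_prime_pow_or_not_dvd_of_dvd hp.out (relIndex_inf_inf_dvd (hle i) C) (hf i hi) with
      ⟨j, hj⟩ | hndvd
    · exact le_pCore inferInstance (isPGroup_of_relIndex_eq_pow hAD (isPGroup_pCore.to_le hA) hj)
    · exact (le_of_le_centralizer_of_not_dvd_relIndex hG' inf_le_left hA hndvd).trans hA

end HallHigman

/-! ### Bounding the `p`-length -/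

section Bound

variable {G : Type*} [Group G]

lemma ker_conjNormal_le_centralizer (N : Subgroup G) [N.Normal] :
    (MulAut.conjNormal (H := N)).ker ≤ Subgroup.centralizer (N : Set G) := by
  intro g hg n hn
  have hgn := congrArg Subtype.val (DFunLike.congr_fun (MonoidHom.mem_ker.1 hg) ⟨n, hn⟩)
  rw [MulAut.conjNormal_apply] at hgn
  exact (mul_inv_eq_iff_eq_mul.1 hgn).symm

variable [Finite G]

lemma card_mulAut_le : Nat.card (MulAut G) ≤ (Nat.card G).factorial := by
  rw [← Nat.card_perm]
  exact Nat.card_le_card_of_injective MulEquiv.toEquiv MulEquiv.toEquiv_injective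

variable {p : ℕ} [hp : Fact p.Prime]

lemma pLengthLE_of_pPrimeCore_eq_bot (hG : IsPSoluble p G) (hG' : pPrimeCore p G = ⊥) :
    PLengthLE p G ((Nat.card (pCore p G ⧸ frattini (pCore p G))).factorial + 1) := by
  set T := pCore p G
  let ρ : G →* MulAut (T ⧸ frattini T) := (quotientAut (frattini T)).comp MulAut.conjNormal
  have hconj : IsPGroup p (MulAut.conjNormal (H := T)).ker :=
    isPGroup_pCore.to_le ((ker_conjNormal_le_centralizer T).trans (centralizer_pCore_le hG hG'))
  have hker : IsPGroup p ρ.ker :=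
    (isPGroup_ker_quotientAut_frattini isPGroup_pCore).comap_of_ker_isPGroup _ hconj
  have hcard : Nat.card (G ⧸ ρ.ker) ≤ (Nat.card (T ⧸ frattini T)).factorial := by
    rw [← Subgroup.index_eq_card, Subgroup.index_ker]
    exact (Subgroup.card_le_card_group _).trans card_mulAut_le
  refine (PLengthLE.of_quotient (Or.inl (IsPGroup.iff_card.1 hker))
    ((hG.quotient hp.out ρ.ker).pLengthLE_card hp.out.one_lt)).mono ?_
  gcongr
  split_ifs <;> omega

theorem pLength_bounded_of_few_fixed_points_in_sylow_general {n c : ℕ} (hG : IsPSoluble p G)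
    {φ : MulAut G} (hφ : φ ^ p ^ n = 1) (P : Sylow p G)
    (hP : (P : Subgroup G).map φ.toMonoidHom ≤ P)
    (hc : Nat.card ↥((P : Subgroup G) ⊓ fixedSubgroup φ.toMonoidHom) ≤ c) :
    PLengthLE p G ((c ^ p ^ n).factorial + 1) := by
  set K := pPrimeCore p G
  set ψ := quotientAut K φ
  set T := pCore p (G ⧸ K)
  have hK : ¬ p ∣ Nat.card K := not_dvd_card_pPrimeCore hp.out
  have hT : T ≤ (P : Subgroup G).map (QuotientGroup.mk' K) :=
    pCore_le_sylow (P.mapSurjective (QuotientGroup.mk'_surjective K))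
  have hfix : Nat.card (fixedSubgroup (MulAut.characteristic T ψ).toMonoidHom) ≤ c :=
    calc _ = Nat.card ↥(T ⊓ fixedSubgroup ψ.toMonoidHom) := card_fixedSubgroup_characteristic T ψ
      _ ≤ Nat.card ↥((P : Subgroup G).map (QuotientGroup.mk' K) ⊓ fixedSubgroup ψ.toMonoidHom) :=
        Subgroup.card_le_of_le (inf_le_inf_right _ hT)
      _ ≤ _ := card_map_inf_fixedSubgroup_le (QuotientGroup.mk' K) (fun _ => rfl) hP
      _ ≤ c := hc
  have hψ : MulAut.characteristic T ψ ^ p ^ n = 1 := by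
    rw [← map_pow, ← map_pow, hφ, map_one, map_one]
  have hquot : PLengthLE p (G ⧸ K) ((Nat.card (T ⧸ frattini T)).factorial + 1) :=
    pLengthLE_of_pPrimeCore_eq_bot (hG.quotient hp.out K) (pPrimeCore_quotient_pPrimeCore hp.out)
  have hlift := hquot.of_quotient (Or.inr hK)
  rw [if_neg hK, add_zero] at hlift
  refine hlift.mono ?_
  gcongr
  exact (card_quotient_frattini_le isPGroup_pCore hψ).trans (Nat.pow_le_pow_left hfix _)

end Bound

theorem pLength_bounded_of_few_fixed_points_in_sylow :
    ∃ f : ℕ × ℕ × ℕ → ℕ, ∀ (p n m : ℕ), p.Prime →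
      ∀ (G : Type) [Group G] [Finite G], IsPSoluble p G →
        ∀ φ : MulAut G, orderOf φ = p ^ n →
          ∀ P : Sylow p G, (P : Subgroup G).map φ.toMonoidHom = (P : Subgroup G) →
            Nat.card {x : G // x ∈ (P : Subgroup G) ∧ φ x = x} = p ^ m →
            PLengthLE p G (f (p, n, m)) := by
  refine ⟨fun (p, n, m) => ((p ^ m) ^ p ^ n).factorial + 1, ?_⟩
  intro p n m hp G _ _ hG φ hφ P hP hc
  have := Fact.mk hp
  exact pLength_bounded_of_few_fixed_points_in_sylow_general hG (hφ ▸ pow_orderOf_eq_one φ) P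
    hP.le hc.le
end
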